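/- Let n₁ ≥ 2 and n₂ ≥ 4 be integers. Then dim(K_{n₁}⊙P_{n₂}) ≥ 2n₁. -/

import Mathlib

open SimpleGraph

/-- The corona product `G ⊙ H`: one copy of `G`, one copy of `H` for each vertex of `G`,
with the `i`-th vertex of `G` joined to every vertex of the `i`-th copy of `H`. -/
def corona {α β : Type*} (G : SimpleGraph α) (H : SimpleGraph β) :
    SimpleGraph (α ⊕ α × β) :=
  SimpleGraph.fromRel (fun x y =>
    match x, y with
    | Sum.inl a, Sum.inl b => G.Adj a b
    | Sum.inl a, Sum.inr iu => a = iu.1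
    | Sum.inr iu, Sum.inr jw => iu.1 = jw.1 ∧ H.Adj iu.2 jw.2
    | _, _ => False)

/-- The distance from a vertex to a set of vertices: `d(v,A) = min_{u ∈ A} d(v,u)`. -/
noncomputable def setDist {α : Type*} (G : SimpleGraph α) (v : α) (A : Set α) : ℕ :=
  sInf (G.dist v '' A)

/-- `S` is a resolving set for `G`: distinct vertices have distinct metric representations. -/
def IsResolvingSet {α : Type*} (G : SimpleGraph α) (S : Set α) : Prop :=
  ∀ u v : α, (∀ w ∈ S, G.dist u w = G.dist v w) → u = v

/-- The metric dimension of `G`: minimum cardinality of a resolving set. -/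
noncomputable def metricDim {α : Type*} (G : SimpleGraph α) : ℕ :=
  sInf {k | ∃ S : Set α, IsResolvingSet G S ∧ S.ncard = k}

/-- A family of sets is a resolving partition for `G` if it is a partition of the vertex set
into nonempty cells and distinct vertices have distinct partition representations. -/
def IsResolvingPartition {α : Type*} (G : SimpleGraph α) (P : Set (Set α)) : Prop :=
  (∀ A ∈ P, A.Nonempty) ∧ (∀ v : α, ∃! A : Set α, A ∈ P ∧ v ∈ A) ∧
    ∀ u v : α, (∀ A ∈ P, setDist G u A = setDist G v A) → u = v

/-- The partition dimension of `G`: minimum number of cells in a resolving partition. -/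
noncomputable def partitionDim {α : Type*} (G : SimpleGraph α) : ℕ :=
  sInf {t | ∃ P : Set (Set α), IsResolvingPartition G P ∧ P.ncard = t}

/-- `c(H)`: the maximum cardinality of a connected component of `H` which is isomorphic to a
complete graph (i.e. whose vertex set is a clique). -/
noncomputable def maxCompleteComp {β : Type*} (H : SimpleGraph β) : ℕ :=
  sSup {k | ∃ C : H.ConnectedComponent, H.IsClique C.supp ∧ C.supp.ncard = k}

/-- `β(H)`: the number of isolated vertices of `H`. -/
noncomputable def numIsolated {β : Type*} (H : SimpleGraph β) : ℕ :=
  Set.ncard {v : β | ∀ u, ¬ H.Adj v u}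

/-- `α(H)`: the number of connected components of `H` of order greater than one. -/
noncomputable def numBigComp {β : Type*} (H : SimpleGraph β) : ℕ :=
  Set.ncard {C : H.ConnectedComponent | 1 < C.supp.ncard}

/-!
Every walk leaving a copy of `H` in `G ⊙ H` passes through the vertex of `G` that copy is attached
to, so only vertices of `S` inside the copy can tell two of its vertices apart. Two distinct
vertices of the same copy are at distance `1` or `2`, according to whether they are adjacent in `H`.
Hence the vertices of a copy outside a resolving set have distinct neighbourhoods in its trace on
that copy. A trace of `t` vertices has only `2 ^ t` subsets, so `H` has at most
`t + 2 ^ t` vertices; four vertices force `t ≥ 2`.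
-/

section MetricDim

variable {V : Type*} {G : SimpleGraph V}

lemma isResolvingSet_univ (hG : G.Preconnected) : IsResolvingSet G Set.univ := by
  intro u v h
  have hdist : G.dist u v = 0 := (h v (Set.mem_univ v)).trans G.dist_self
  exact (hG u v).dist_eq_zero_iff.1 hdist

lemma le_metricDim (hG : G.Preconnected) {m : ℕ}
    (h : ∀ S : Set V, IsResolvingSet G S → m ≤ S.ncard) : m ≤ metricDim G := by
  refine le_csInf ⟨_, Set.univ, isResolvingSet_univ hG, rfl⟩ ?_
  rintro _ ⟨S, hS, rfl⟩
  exact h S hS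

end MetricDim

section LocatingSet

variable {β : Type*} {H : SimpleGraph β} {T : Set β}

/-- `T` is a locating set of `H`: distinct vertices outside `T` have distinct neighbourhoods in `T`.
This is what a resolving set of `G ⊙ H` induces on each copy of `H`. Unlike for
locating-dominating sets, one of these neighbourhoods may be empty. -/
def IsLocatingSet (H : SimpleGraph β) (T : Set β) : Prop :=
  Set.InjOn (fun u ↦ H.neighborSet u ∩ T) Tᶜ

lemma IsLocatingSet.card_le [Fintype β] (hT : IsLocatingSet H T) :
    Fintype.card β ≤ T.ncard + 2 ^ T.ncard := by
  have hcompl : Tᶜ.ncard ≤ (𝒫 T).ncard :=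
    Set.ncard_le_ncard_of_injOn _ (fun _ _ ↦ Set.inter_subset_right) hT
  calc Fintype.card β = T.ncard + Tᶜ.ncard := by
        rw [Set.ncard_add_ncard_compl, Nat.card_eq_fintype_card]
    _ ≤ T.ncard + 2 ^ T.ncard := by
        rw [← Set.ncard_powerset T]
        gcongr

lemma IsLocatingSet.lt_ncard [Fintype β] (hT : IsLocatingSet H T) {k : ℕ}
    (hk : k + 2 ^ k < Fintype.card β) : k < T.ncard := by
  by_contra! hle
  refine hk.not_ge (hT.card_le.trans ?_)
  gcongr
  exact one_le_two

end LocatingSet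

section Corona

variable {α β : Type*} {G : SimpleGraph α} {H : SimpleGraph β}

@[simp]
lemma corona_adj_inl_inl {i j : α} :
    (corona G H).Adj (Sum.inl i) (Sum.inl j) ↔ G.Adj i j := by
  simpa [corona, G.adj_comm j i] using G.ne_of_adj

@[simp]
lemma corona_adj_inr_inl {i j : α} {u : β} :
    (corona G H).Adj (Sum.inr (i, u)) (Sum.inl j) ↔ j = i := by
  simp [corona]

@[simp]
lemma corona_adj_inr_inr {i j : α} {u v : β} :
    (corona G H).Adj (Sum.inr (i, u)) (Sum.inr (j, v)) ↔ i = j ∧ H.Adj u v := by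
  simp only [corona, fromRel_adj, H.adj_comm v u, eq_comm (a := j), or_self, and_iff_right_iff_imp]
  rintro ⟨-, huv⟩ heq
  exact huv.ne (congrArg Prod.snd (Sum.inr_injective heq))

lemma corona_preconnected (hG : G.Preconnected) : (corona G H).Preconnected := by
  have reachable_base : ∀ x, ∃ i, (corona G H).Reachable x (Sum.inl i) := by
    rintro (i | ⟨i, u⟩)
    · exact ⟨i, .rfl⟩
    · exact ⟨i, (corona_adj_inr_inl.2 rfl).reachable⟩
  let inlHom : G →g corona G H := ⟨Sum.inl, corona_adj_inl_inl.2⟩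
  intro x y
  obtain ⟨i, hi⟩ := reachable_base x
  obtain ⟨j, hj⟩ := reachable_base y
  exact hi.trans (((hG i j).map inlHom).trans hj.symm)

lemma corona_edist_inl_add_one_le_length {i : α} {y x : α ⊕ α × β} (p : (corona G H).Walk y x)
    {u : β} (hy : y = Sum.inr (i, u)) (hx : ∀ w, x ≠ Sum.inr (i, w)) :
    (corona G H).edist (Sum.inl i) x + 1 ≤ p.length := by
  induction p generalizing u with
  | nil => exact absurd hy (hx u)
  | @cons _ z _ hadj p ih =>
    subst hy
    rw [Walk.length_cons, Nat.cast_add_one]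
    gcongr
    rcases z with j | ⟨j, v⟩
    · obtain rfl := corona_adj_inr_inl.1 hadj
      exact p.edist_le
    · obtain ⟨rfl, -⟩ := corona_adj_inr_inr.1 hadj
      exact le_self_add.trans (ih rfl hx)

lemma corona_edist_inr_of_notMem_copy {i : α} {x : α ⊕ α × β} (hx : ∀ w, x ≠ Sum.inr (i, w))
    (u : β) :
    (corona G H).edist (Sum.inr (i, u)) x = (corona G H).edist (Sum.inl i) x + 1 := by
  apply le_antisymm
  · have hadj : (corona G H).edist (Sum.inr (i, u)) (Sum.inl i) = 1 :=
      edist_eq_one_iff_adj.2 (corona_adj_inr_inl.2 rfl)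
    rw [add_comm, ← hadj]
    exact SimpleGraph.edist_triangle
  · exact le_iInf fun p ↦ corona_edist_inl_add_one_le_length p rfl hx

lemma corona_edist_inr_inr_of_ne (i : α) {u v : β} (huv : u ≠ v) [Decidable (H.Adj u v)] :
    (corona G H).edist (Sum.inr (i, u)) (Sum.inr (i, v)) = if H.Adj u v then 1 else 2 := by
  split_ifs with hadj
  · exact edist_eq_one_iff_adj.2 (corona_adj_inr_inr.2 ⟨rfl, hadj⟩)
  · refine edist_eq_two_iff.2 ⟨by simpa using huv, by simpa using hadj, Sum.inl i, ?_⟩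
    simp [mem_commonNeighbors]

/-- The trace of a set `S` of vertices of `G ⊙ H` on the `i`-th copy of `H`, as a set of vertices
of `H`, so that conditions on `S` inside a copy can be stated in terms of `H` alone. -/
def copyTrace (S : Set (α ⊕ α × β)) (i : α) : Set β :=
  {u | Sum.inr (i, u) ∈ S}

lemma sum_ncard_copyTrace_le [Fintype α] {S : Set (α ⊕ α × β)} (hS : S.Finite) :
    ∑ i, (copyTrace S i).ncard ≤ S.ncard := by
  let copy (i : α) : Set (α ⊕ α × β) := (fun u ↦ Sum.inr (i, u)) '' copyTrace S i
  have copy_subset (i : α) : copy i ⊆ S := by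
    rintro _ ⟨u, hu, rfl⟩
    exact hu
  have ncard_copy (i : α) : (copy i).ncard = (copyTrace S i).ncard :=
    Set.ncard_image_of_injective _ (Sum.inr_injective.comp (Prod.mk_right_injective i))
  have copy_disjoint : Pairwise (Function.onFun Disjoint copy) := by
    intro i j hij
    refine Set.disjoint_left.2 ?_
    rintro _ ⟨u, -, rfl⟩ ⟨v, -, heq⟩
    exact hij (congrArg Prod.fst (Sum.inr_injective heq)).symm
  calc ∑ i, (copyTrace S i).ncard = (⋃ i, copy i).ncard := by
        rw [Set.ncard_iUnion_of_finite (fun i ↦ hS.subset (copy_subset i)) copy_disjoint,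
          finsum_eq_sum_of_fintype]
        simp only [ncard_copy]
    _ ≤ S.ncard := Set.ncard_le_ncard (Set.iUnion_subset copy_subset) hS

lemma IsResolvingSet.isLocatingSet_copyTrace {S : Set (α ⊕ α × β)}
    (hS : IsResolvingSet (corona G H) S) (i : α) : IsLocatingSet H (copyTrace S i) := by
  classical
  intro u hu v hv huv
  suffices heq : (Sum.inr (i, u) : α ⊕ α × β) = Sum.inr (i, v) from
    congrArg Prod.snd (Sum.inr_injective heq)
  refine hS _ _ fun x hx ↦ congrArg ENat.toNat ?_
  by_cases hcopy : ∃ w, x = Sum.inr (i, w)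
  · obtain ⟨w, rfl⟩ := hcopy
    have hwT : w ∈ copyTrace S i := hx
    have hadj : H.Adj u w ↔ H.Adj v w := by simpa [hwT] using Set.ext_iff.1 huv w
    rw [corona_edist_inr_inr_of_ne i (ne_of_mem_of_not_mem hwT hu).symm,
      corona_edist_inr_inr_of_ne i (ne_of_mem_of_not_mem hwT hv).symm]
    simp only [hadj]
  · rw [corona_edist_inr_of_notMem_copy (not_exists.1 hcopy),
      corona_edist_inr_of_notMem_copy (not_exists.1 hcopy)]

theorem mul_card_le_metricDim_corona [Fintype α] [Finite β] (hG : G.Preconnected) {m : ℕ}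
    (hH : ∀ T : Set β, IsLocatingSet H T → m ≤ T.ncard) :
    m * Fintype.card α ≤ metricDim (corona G H) := by
  refine le_metricDim (corona_preconnected hG) fun S hS ↦ ?_
  calc m * Fintype.card α = ∑ _ : α, m := by simp [mul_comm]
    _ ≤ ∑ i, (copyTrace S i).ncard :=
        Finset.sum_le_sum fun i _ ↦ hH _ (hS.isLocatingSet_copyTrace i)
    _ ≤ S.ncard := sum_ncard_copyTrace_le S.toFinite

end Corona

theorem stmt18_general {α β : Type*} [Fintype α] [Fintype β] {G : SimpleGraph α}
    (hG : G.Preconnected) (H : SimpleGraph β) {k : ℕ} (hk : k + 2 ^ k < Fintype.card β) :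
    (k + 1) * Fintype.card α ≤ metricDim (corona G H) :=
  mul_card_le_metricDim_corona hG fun _ hT ↦ hT.lt_ncard hk

/-- For integers `n₁ ≥ 2` and `n₂ ≥ 4`, `dim(K_{n₁}⊙P_{n₂}) ≥ 2n₁`. -/
theorem stmt18 (n₁ n₂ : ℕ) (h₁ : 2 ≤ n₁) (h₂ : 4 ≤ n₂) :
    metricDim (corona (⊤ : SimpleGraph (Fin n₁)) (pathGraph n₂)) ≥ 2 * n₁ := by
  have hcard : 1 + 2 ^ 1 < Fintype.card (Fin n₂) := by
    rw [Fintype.card_fin]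
    lia
  simpa using stmt18_general (α := Fin n₁) preconnected_top (pathGraph n₂) hcard
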